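/- Let λ have block structure k and let γ be a face of the ladder diagram Γ_k. Define the point x̄ = (x̄_{i,j}) ∈ ℝ^d recursively by: x̄_{i,n+1−i} = λ_i for 1 ≤ i ≤ n, and for (i,j) ∈ I with i+j ≤ n−1 (given x̄_{i,j+1} and x̄_{i+1,j}): x̄_{i,j} = x̄_{i,j+1} if ((i−1,j),(i,j)) is not an edge of γ; x̄_{i,j} = x̄_{i+1,j} if ((i−1,j),(i,j)) is an edge of γ but ((i,j−1),(i,j)) is not; and x̄_{i,j} = (x̄_{i,j+1}+x̄_{i+1,j})/2 if both ((i−1,j),(i,j)) and ((i,j−1),(i,j)) are edges of γ. Then x̄ ∈ P_λ, and for every (i,j) ∈ I one has: x̄_{i,j} < x̄_{i,j+1} if and only if ((i−1,j),(i,j)) is an edge of γ, and x̄_{i,j} > x̄_{i+1,j} if and only if ((i,j−1),(i,j)) is an edge of γ. -/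

import Mathlib

open Classical

noncomputable section

/-- Partial sums of the (0-indexed) sequence `k`: `nseq k i = k 0 + ⋯ + k (i-1)`;
so `nseq k i` is the paper's `n_i` for the sequence `(k_1, …, k_s) = (k 0, …, k (s-1))`. -/
def nseq (k : ℕ → ℕ) (i : ℕ) : ℕ := ∑ j ∈ Finset.range i, k j

/-- The set of terminal vertices `T_k = {(n_i, n - n_i) : 0 ≤ i ≤ s}` of the ladder diagram. -/
def terminals (s : ℕ) (k : ℕ → ℕ) : Set (ℕ × ℕ) :=
  {v | ∃ i ≤ s, v = (nseq k i, nseq k s - nseq k i)}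

/-- The vertex set of the ladder diagram `Γ_k`. -/
def ladderV (s : ℕ) (k : ℕ → ℕ) : Set (ℕ × ℕ) :=
  {v | ∃ t ∈ terminals s k, v.1 ≤ t.1 ∧ v.2 ≤ t.2}

/-- A unit grid step: one step to the right or one step up. -/
def gridStep (v w : ℕ × ℕ) : Prop :=
  w = (v.1 + 1, v.2) ∨ w = (v.1, v.2 + 1)

/-- The edge set of the ladder diagram `Γ_k`. -/
def ladderE (s : ℕ) (k : ℕ → ℕ) : Set ((ℕ × ℕ) × (ℕ × ℕ)) :=
  {e | e.1 ∈ ladderV s k ∧ e.2 ∈ ladderV s k ∧ gridStep e.1 e.2}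

/-- A combinatorial (directed) graph in the grid `ℤ_{≥0} × ℤ_{≥0}`,
given by a set of vertices and a set of edges. -/
@[ext] structure LGraph where
  V : Set (ℕ × ℕ)
  E : Set ((ℕ × ℕ) × (ℕ × ℕ))

/-- Subgraph inclusion order on grid graphs. -/
instance : PartialOrder LGraph where
  le γ γ' := γ.V ⊆ γ'.V ∧ γ.E ⊆ γ'.E
  le_refl γ := ⟨subset_rfl, subset_rfl⟩
  le_trans a b c h h' := ⟨h.1.trans h'.1, h.2.trans h'.2⟩
  le_antisymm a b h h' := LGraph.ext (subset_antisymm h.1 h'.1) (subset_antisymm h.2 h'.2)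

/-- The ladder diagram `Γ_k` as a grid graph. -/
def ladder (s : ℕ) (k : ℕ → ℕ) : LGraph :=
  ⟨ladderV s k, ladderE s k⟩

/-- A positive path: (the graph of) a shortest path in the ladder diagram `Γ_k`
from the origin `(0,0)` to a terminal vertex. -/
def IsPositivePath (s : ℕ) (k : ℕ → ℕ) (p : LGraph) : Prop :=
  ∃ (m : ℕ) (f : ℕ → ℕ × ℕ),
    f 0 = (0, 0) ∧ f m ∈ terminals s k ∧
    (∀ i < m, gridStep (f i) (f (i + 1))) ∧
    (∀ i ≤ m, f i ∈ ladderV s k) ∧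
    p.V = {v | ∃ i ≤ m, v = f i} ∧
    p.E = {e | ∃ i < m, e = (f i, f (i + 1))}

/-- A face of the ladder diagram `Γ_k`: a subgraph which contains all terminal
vertices and is a union of positive paths. -/
def IsLadderFace (s : ℕ) (k : ℕ → ℕ) (γ : LGraph) : Prop :=
  terminals s k ⊆ γ.V ∧
  ∃ P : Set LGraph, (∀ p ∈ P, IsPositivePath s k p) ∧
    γ.V = ⋃ p ∈ P, LGraph.V p ∧ γ.E = ⋃ p ∈ P, LGraph.E p

/-- The dimension (first Betti number) of a face of a ladder diagram:
`|E(γ)| - |V(γ)| + 1`. -/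
def ldim (γ : LGraph) : ℤ :=
  (γ.E.ncard : ℤ) - (γ.V.ncard : ℤ) + 1

/-- The index set `I = {(i,j) : i,j ≥ 1, i+j ≤ n}` of the coordinates of a
Gelfand–Cetlin pattern. -/
def GCIdx (n : ℕ) : Set (ℕ × ℕ) := {p | 1 ≤ p.1 ∧ 1 ≤ p.2 ∧ p.1 + p.2 ≤ n}

/-- The entries of a Gelfand–Cetlin pattern `x`, extended by the boundary
condition `x_{i, n+1-i} = λ_i`. -/
def gcEntry (n : ℕ) (lam : ℕ → ℝ) (x : GCIdx n → ℝ) (p : ℕ × ℕ) : ℝ :=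
  if h : p ∈ GCIdx n then x ⟨p, h⟩ else lam p.1

/-- The Gelfand–Cetlin polytope `P_λ`: the set of points `(x_{i,j})_{(i,j) ∈ I}`
with `x_{i,j+1} ≥ x_{i,j} ≥ x_{i+1,j}` for all `(i,j) ∈ I`, where
`x_{i,n+1-i} = λ_i`. -/
def GCPoly (n : ℕ) (lam : ℕ → ℝ) : Set (GCIdx n → ℝ) :=
  {x | ∀ i j : ℕ, (i, j) ∈ GCIdx n →
    gcEntry n lam x (i, j) ≤ gcEntry n lam x (i, j + 1) ∧
    gcEntry n lam x (i + 1, j) ≤ gcEntry n lam x (i, j)}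

/-- The subset of `P_λ` obtained by turning the inequalities
`x_{i,j+1} ≥ x_{i,j}` for `(i,j) ∈ SH` and `x_{i,j} ≥ x_{i+1,j}` for
`(i,j) ∈ SV` into equalities. -/
def GCFaceOf (n : ℕ) (lam : ℕ → ℝ) (SH SV : Set (ℕ × ℕ)) : Set (GCIdx n → ℝ) :=
  {x | x ∈ GCPoly n lam ∧
    (∀ p ∈ SH, gcEntry n lam x (p.1, p.2 + 1) = gcEntry n lam x p) ∧
    (∀ p ∈ SV, gcEntry n lam x p = gcEntry n lam x (p.1 + 1, p.2))}

/-- A face of the GC polytope: a nonempty solution set of the system obtained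
by replacing some of the defining inequalities by equalities. -/
def IsGCFace (n : ℕ) (lam : ℕ → ℝ) (F : Set (GCIdx n → ℝ)) : Prop :=
  F.Nonempty ∧ ∃ SH SV : Set (ℕ × ℕ), SH ⊆ GCIdx n ∧ SV ⊆ GCIdx n ∧
    F = GCFaceOf n lam SH SV

/-- The dimension of (a face of) the GC polytope: the dimension of its affine span. -/
def GCdim (n : ℕ) (F : Set (GCIdx n → ℝ)) : ℕ :=
  Module.finrank ℝ (affineSpan ℝ F).direction

/-- `lam` (1-indexed) is weakly decreasing with block structure `k`: it is
constant on each block `(n_{i-1}, n_i]` and strictly decreases between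
consecutive blocks. -/
def HasBlockStructure (s : ℕ) (k : ℕ → ℕ) (lam : ℕ → ℝ) : Prop :=
  (∀ i < s, ∀ a b : ℕ, nseq k i < a → a ≤ b → b ≤ nseq k (i + 1) → lam a = lam b) ∧
  (∀ i : ℕ, 1 ≤ i → i < s → lam (nseq k i + 1) < lam (nseq k i))

/-- The edge set of the graph `φ(F)` associated to a subset `F` of the GC polytope. -/
def phiE (n : ℕ) (lam : ℕ → ℝ) (F : Set (GCIdx n → ℝ)) :
    Set ((ℕ × ℕ) × (ℕ × ℕ)) :=
  {e | (∃ i < n, e = ((0, i), (0, i + 1)) ∨ e = ((i, 0), (i + 1, 0))) ∨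
    (∃ i j : ℕ, (i, j) ∈ GCIdx n ∧ e = ((i - 1, j), (i, j)) ∧
      ∃ x ∈ F, gcEntry n lam x (i, j) < gcEntry n lam x (i, j + 1)) ∨
    (∃ i j : ℕ, (i, j) ∈ GCIdx n ∧ e = ((i, j - 1), (i, j)) ∧
      ∃ x ∈ F, gcEntry n lam x (i + 1, j) < gcEntry n lam x (i, j))}

/-- The graph `φ(F)`: its edges are given by `phiE` and its vertices are the
endpoints of its edges. -/
def phiGC (n : ℕ) (lam : ℕ → ℝ) (F : Set (GCIdx n → ℝ)) : LGraph where
  V := {v | ∃ e ∈ phiE n lam F, v = e.1 ∨ v = e.2}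
  E := phiE n lam F

/-- The map `ψ`: for a subgraph `γ`, the set of points of `P_λ` where the
inequalities corresponding to the missing edges of `γ` become equalities. -/
def psiGC (n : ℕ) (lam : ℕ → ℝ) (γ : LGraph) : Set (GCIdx n → ℝ) :=
  {x | x ∈ GCPoly n lam ∧ ∀ i j : ℕ, (i, j) ∈ GCIdx n →
    (((i - 1, j), (i, j)) ∉ γ.E → gcEntry n lam x (i, j) = gcEntry n lam x (i, j + 1)) ∧
    (((i, j - 1), (i, j)) ∉ γ.E → gcEntry n lam x (i, j) = gcEntry n lam x (i + 1, j))}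
/-- The recursively defined point `x̄` of the proof of Lemma 2.6 (bijectivity):
`x̄_{i,j} = λ_i` if `i + j = n + 1`, and for `i + j ≤ n` it is determined from
`x̄_{i,j+1}` and `x̄_{i+1,j}` according to which of the two edges
`((i-1,j),(i,j))`, `((i,j-1),(i,j))` belong to `E`. -/
def barX (n : ℕ) (lam : ℕ → ℝ) (E : Set ((ℕ × ℕ) × (ℕ × ℕ))) : ℕ → ℕ → ℝ
  | i, j =>
    if h1 : n + 1 ≤ i + j then lam i
    else if h2 : ((i - 1, j), (i, j)) ∈ E then
      if h3 : ((i, j - 1), (i, j)) ∈ E then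
        (barX n lam E i (j + 1) + barX n lam E (i + 1) j) / 2
      else barX n lam E (i + 1) j
    else barX n lam E i (j + 1)
  termination_by i j => n + 1 - (i + j)
  decreasing_by all_goals omega

/-- `α, β : ℕ → ℕ` encode an element
`w = ((α_1,β_1),…,(α_{s-1},β_{s-1})) ∈ W_{s-1}`, with the conventions
`α_0 = 0`, `β_0 = 1`, `α_s = 1`, `β_s = 0`. -/
def IsW (s : ℕ) (α β : ℕ → ℕ) : Prop :=
  (∀ i : ℕ, 1 ≤ i → i < s →
    (α i, β i) = (1, 0) ∨ (α i, β i) = (0, 1) ∨ (α i, β i) = (1, 1)) ∧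
  α 0 = 0 ∧ β 0 = 1 ∧ α s = 1 ∧ β s = 0

/-- The edge set of the subgraph `g_w` of `Γ_k`: the horizontal edge into the
terminal vertex `v_i` when `α_i = 1` and the vertical edge into `v_i` when
`β_i = 1`. -/
def gwE (s : ℕ) (k α β : ℕ → ℕ) : Set ((ℕ × ℕ) × (ℕ × ℕ)) :=
  {e | ∃ i ≤ s,
    (α i = 1 ∧
      e = ((nseq k i - 1, nseq k s - nseq k i), (nseq k i, nseq k s - nseq k i))) ∨
    (β i = 1 ∧
      e = ((nseq k i, nseq k s - nseq k i - 1), (nseq k i, nseq k s - nseq k i)))}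

/-- The subgraph `g_w` of `Γ_k`. -/
def gwGraph (s : ℕ) (k α β : ℕ → ℕ) : LGraph where
  V := {v | ∃ e ∈ gwE s k α β, v = e.1 ∨ v = e.2}
  E := gwE s k α β

/-- The interleaved sequence `r_w(k) * w̃` of length `2s - 1` (0-indexed):
entry `2j` is `k''_{j+1} = k_{j+1} + 1 - α_{j+1} - β_j` and entry `2j + 1` is
`w̃_{j+1} = α_{j+1} β_{j+1}`. -/
def rstar (s : ℕ) (k α β : ℕ → ℕ) (t : ℕ) : ℕ :=
  if t % 2 = 0 then k (t / 2) + 1 - α (t / 2 + 1) - β (t / 2)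
  else α (t / 2 + 1) * β (t / 2 + 1)

/-- `α`-value of one of the three symbols `(1,0), (0,1), (1,1)`,
encoded as `0, 1, 2 : Fin 3` respectively. -/
def aW3 (c : Fin 3) : ℕ := if c = 1 then 0 else 1

/-- `β`-value of one of the three symbols `(1,0), (0,1), (1,1)`,
encoded as `0, 1, 2 : Fin 3` respectively. -/
def bW3 (c : Fin 3) : ℕ := if c = 0 then 0 else 1

/-- The function `α` of the element of `W_{s-1}` encoded by
`c : Fin (s-1) → Fin 3` (with the conventions `α_0 = 0`, `α_s = 1`). -/
def alph (s : ℕ) (c : Fin (s - 1) → Fin 3) (i : ℕ) : ℕ :=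
  if i = 0 then 0 else if h : i - 1 < s - 1 then aW3 (c ⟨i - 1, h⟩) else 1

/-- The function `β` of the element of `W_{s-1}` encoded by
`c : Fin (s-1) → Fin 3` (with the conventions `β_0 = 1`, `β_s = 0`). -/
def bet (s : ℕ) (c : Fin (s - 1) → Fin 3) (i : ℕ) : ℕ :=
  if i = 0 then 1 else if h : i - 1 < s - 1 then bW3 (c ⟨i - 1, h⟩) else 0

/-- The interleaved sequence `r_w(k) * w̃` (of length `2s - 1`, 0-indexed) for
the element `w ∈ W_{s-1}` encoded by `c`. -/
def newk (s : ℕ) (c : Fin (s - 1) → Fin 3) (k : ℕ → ℕ) (t : ℕ) : ℕ :=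
  if t % 2 = 0 then k (t / 2) + 1 - alph s c (t / 2 + 1) - bet s c (t / 2)
  else alph s c (t / 2 + 1) * bet s c (t / 2 + 1)

/-- `|w| = Σ_{i=1}^{s-1} α_i β_i` for the element `w ∈ W_{s-1}` encoded by `c`. -/
def wsize (s : ℕ) (c : Fin (s - 1) → Fin 3) : ℕ :=
  ∑ j ∈ Finset.range (s - 1), alph s c (j + 1) * bet s c (j + 1)

/-- The subgraph `g_w` of `Γ_k` for the element `w ∈ W_{s-1}` encoded by `c`. -/
def gwGraph3 (s : ℕ) (k : ℕ → ℕ) (c : Fin (s - 1) → Fin 3) : LGraph :=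
  gwGraph s k (alph s c) (bet s c)

/-- Union of two grid graphs (union of vertex sets and of edge sets). -/
def ugraph (γ δ : LGraph) : LGraph := ⟨γ.V ∪ δ.V, γ.E ∪ δ.E⟩

/-- The generating function `F_k(t) = Σ_{γ face of Γ_k} t^{dim γ}` of the
`f`-vector of the ladder diagram `Γ_k`, as a formal power series in `t`:
the coefficient of `t^d` is the number of faces of `Γ_k` of dimension `d`. -/
def fpol (s : ℕ) (k : ℕ → ℕ) : PowerSeries ℤ :=
  PowerSeries.mk fun d =>
    (Set.ncard {γ : LGraph | IsLadderFace s k γ ∧ ldim γ = (d : ℤ)} : ℤ)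

/-- The operator `Π_{i=1}^{s-1} (∂/∂x_i + ∂/∂x_{i+1} + t ∂/∂y_i)` applied to a
polynomial in the variables `x_1, x_2, … , y_1, y_2, …` (the variable `x_{i+1}`
is `Sum.inl i` and `y_{i+1}` is `Sum.inr i`) over `ℚ[t]`. -/
def Lfold (s : ℕ) (f : MvPolynomial (ℕ ⊕ ℕ) (Polynomial ℚ)) :
    MvPolynomial (ℕ ⊕ ℕ) (Polynomial ℚ) :=
  (List.range (s - 1)).foldl
    (fun g i =>
      MvPolynomial.pderiv (Sum.inl i) g + MvPolynomial.pderiv (Sum.inl (i + 1)) g +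
        (Polynomial.X : Polynomial ℚ) • MvPolynomial.pderiv (Sum.inr i) g) f

/-- The operator `D_w = Π_{i=1}^{s-1} (∂/∂x_i)^{1-α_i} (∂/∂x_{i+1})^{1-β_i}
(t ∂/∂y_i)^{α_i β_i}` for the element `w ∈ W_{s-1}` encoded by
`c : Fin (s-1) → Fin 3` (`0 ↦ (1,0)`, `1 ↦ (0,1)`, `2 ↦ (1,1)`). -/
def DfoldC (s : ℕ) (c : Fin (s - 1) → Fin 3)
    (f : MvPolynomial (ℕ ⊕ ℕ) (Polynomial ℚ)) : MvPolynomial (ℕ ⊕ ℕ) (Polynomial ℚ) :=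
  (List.finRange (s - 1)).foldl
    (fun g i =>
      if c i = 0 then MvPolynomial.pderiv (Sum.inl ((i : ℕ) + 1)) g
      else if c i = 1 then MvPolynomial.pderiv (Sum.inl (i : ℕ)) g
      else (Polynomial.X : Polynomial ℚ) • MvPolynomial.pderiv (Sum.inr (i : ℕ)) g) f

/-- The operator `D_w` for the element `w ∈ W_{s-1}` encoded by `α, β : ℕ → ℕ`. -/
def DfoldW (s : ℕ) (α β : ℕ → ℕ)
    (f : MvPolynomial (ℕ ⊕ ℕ) (Polynomial ℚ)) : MvPolynomial (ℕ ⊕ ℕ) (Polynomial ℚ) :=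
  (List.range (s - 1)).foldl
    (fun g j =>
      if α (j + 1) = 1 ∧ β (j + 1) = 1 then
        (Polynomial.X : Polynomial ℚ) • MvPolynomial.pderiv (Sum.inr j) g
      else if α (j + 1) = 1 then MvPolynomial.pderiv (Sum.inl (j + 1)) g
      else MvPolynomial.pderiv (Sum.inl j) g) f

/-- Substitution of `0` for all the variables `y_j = Sum.inr j`. -/
def setYzero :
    MvPolynomial (ℕ ⊕ ℕ) (Polynomial ℚ) →ₐ[Polynomial ℚ] MvPolynomial (ℕ ⊕ ℕ) (Polynomial ℚ) :=
  MvPolynomial.aeval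
    (Sum.elim (fun i => MvPolynomial.X (Sum.inl i)) fun _ => (0 : MvPolynomial (ℕ ⊕ ℕ) (Polynomial ℚ)))
end

/-!
The proof is a downward induction on `i + j`. The recursion places `x̄_{i,j}` between
`x̄_{i+1,j}` and `x̄_{i,j+1}`, strictly on the sides where `γ` has an edge into `(i,j)`, as soon as
`x̄_{i+1,j} ≤ x̄_{i,j+1}` with strict inequality exactly when `γ` has an edge into `(i,j)` at all.
On the diagonal `i + j = n` this comparison is `λ_{i+1} ≤ λ_i`, which is strict exactly at the
terminal vertices, and these are the vertices of `γ` on the diagonal. Below the diagonal,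
`x̄_{i+1,j} ≤ x̄_{i+1,j+1} ≤ x̄_{i,j+1}`, and by induction one of these is strict exactly when `γ`
has an edge out of `(i,j)`; since `γ` is a union of positive paths, it then also has an edge in.
-/

open Set

section GridEdges

variable {E : Set ((ℕ × ℕ) × (ℕ × ℕ))} {i j : ℕ}

/-- The edge set `E` contains the left or the lower edge into the grid vertex `(i, j)`. Because of
truncated subtraction, the left edge is a genuine grid edge only for `1 ≤ i`, and the lower edge
only for `1 ≤ j`. -/
def HasInEdge (E : Set ((ℕ × ℕ) × (ℕ × ℕ))) (i j : ℕ) : Prop :=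
  ((i - 1, j), (i, j)) ∈ E ∨ ((i, j - 1), (i, j)) ∈ E

/-- The edge set `E` contains the right or the upper edge out of the grid vertex `(i, j)`. -/
def HasOutEdge (E : Set ((ℕ × ℕ) × (ℕ × ℕ))) (i j : ℕ) : Prop :=
  ((i, j), (i + 1, j)) ∈ E ∨ ((i, j), (i, j + 1)) ∈ E

theorem hasInEdge_of_gridStep {u : ℕ × ℕ} (hu : gridStep u (i, j)) (he : (u, (i, j)) ∈ E) :
    HasInEdge E i j := by
  rcases hu with h | h <;> obtain ⟨rfl, rfl⟩ := Prod.mk.inj h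
  · exact Or.inl he
  · exact Or.inr he

theorem hasOutEdge_of_gridStep {w : ℕ × ℕ} (hw : gridStep (i, j) w) (he : ((i, j), w) ∈ E) :
    HasOutEdge E i j := by
  rcases hw with rfl | rfl
  · exact Or.inl he
  · exact Or.inr he

theorem hasInEdge_biUnion {ι : Type*} {P : Set ι} {F : ι → Set ((ℕ × ℕ) × (ℕ × ℕ))} :
    HasInEdge (⋃ p ∈ P, F p) i j ↔ ∃ p ∈ P, HasInEdge (F p) i j := by
  simp [HasInEdge, and_or_left, exists_or]

theorem hasOutEdge_biUnion {ι : Type*} {P : Set ι} {F : ι → Set ((ℕ × ℕ) × (ℕ × ℕ))} :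
    HasOutEdge (⋃ p ∈ P, F p) i j ↔ ∃ p ∈ P, HasOutEdge (F p) i j := by
  simp [HasOutEdge, and_or_left, exists_or]

end GridEdges

section Ladder

variable {s : ℕ} {k : ℕ → ℕ}

theorem nseq_mono (k : ℕ → ℕ) : Monotone (nseq k) := fun _ _ h =>
  Finset.sum_le_sum_of_subset (Finset.range_mono h)

theorem exists_nseq_lt_le {a : ℕ} (ha : 1 ≤ a) (has : a ≤ nseq k s) :
    ∃ i < s, nseq k i < a ∧ a ≤ nseq k (i + 1) := by
  have hmem : a ∈ Ioc (nseq k 0) (nseq k s) := ⟨ha, has⟩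
  rw [← (nseq_mono k).biUnion_Ico_Ioc_map_succ] at hmem
  obtain ⟨i, hi, hlt, hle⟩ := mem_iUnion₂.1 hmem
  exact ⟨i, hi.2, hlt, hle⟩

theorem fst_add_snd_of_mem_terminals {v : ℕ × ℕ} (hv : v ∈ terminals s k) :
    v.1 + v.2 = nseq k s := by
  obtain ⟨i, hi, rfl⟩ := hv
  exact Nat.add_sub_cancel' (nseq_mono k hi)

theorem mem_terminals_iff_exists_nseq {i j : ℕ} (hij : i + j = nseq k s) :
    (i, j) ∈ terminals s k ↔ ∃ t ≤ s, nseq k t = i := by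
  refine exists_congr fun t => and_congr_right fun _ => ?_
  rw [Prod.mk.injEq]
  omega

theorem mem_terminals_of_mem_ladderV {v : ℕ × ℕ} (hv : v ∈ ladderV s k)
    (hsum : nseq k s ≤ v.1 + v.2) : v ∈ terminals s k := by
  obtain ⟨t, ht, h₁, h₂⟩ := hv
  have ht_sum := fst_add_snd_of_mem_terminals ht
  have hvt : v = t := Prod.ext (by omega) (by omega)
  exact hvt ▸ ht

end Ladder

namespace IsPositivePath

variable {s : ℕ} {k : ℕ → ℕ} {p : LGraph} {i j : ℕ}

theorem V_subset_ladderV (hp : IsPositivePath s k p) : p.V ⊆ ladderV s k := by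
  obtain ⟨m, f, -, -, -, hladder, hV, -⟩ := hp
  rw [hV]
  rintro _ ⟨t, ht, rfl⟩
  exact hladder t ht

theorem endpoints_mem_V (hp : IsPositivePath s k p) {u v : ℕ × ℕ} (he : (u, v) ∈ p.E) :
    u ∈ p.V ∧ v ∈ p.V := by
  obtain ⟨m, f, -, -, -, -, hV, hE⟩ := hp
  rw [hE] at he
  obtain ⟨t, ht, he⟩ := he
  obtain ⟨rfl, rfl⟩ := Prod.mk.inj he
  rw [hV]
  exact ⟨⟨t, ht.le, rfl⟩, ⟨t + 1, ht, rfl⟩⟩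

theorem mem_V_iff_hasInEdge (hp : IsPositivePath s k p) (hij : (i, j) ≠ (0, 0)) :
    (i, j) ∈ p.V ↔ HasInEdge p.E i j := by
  refine ⟨fun hv => ?_, fun he => he.elim (fun h => (hp.endpoints_mem_V h).2)
    fun h => (hp.endpoints_mem_V h).2⟩
  obtain ⟨m, f, hzero, -, hstep, -, hV, hE⟩ := hp
  rw [hV] at hv
  obtain ⟨_ | t, ht, hv⟩ := hv
  · exact absurd (hv.trans hzero) hij
  · have hedge : (f t, f (t + 1)) ∈ p.E := hE ▸ ⟨t, ht, rfl⟩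
    exact hasInEdge_of_gridStep (hv ▸ hstep t ht) (hv ▸ hedge)

theorem mem_V_iff_hasOutEdge (hp : IsPositivePath s k p) (hij : (i, j) ∉ terminals s k) :
    (i, j) ∈ p.V ↔ HasOutEdge p.E i j := by
  refine ⟨fun hv => ?_, fun he => he.elim (fun h => (hp.endpoints_mem_V h).1)
    fun h => (hp.endpoints_mem_V h).1⟩
  obtain ⟨m, f, -, hend, hstep, -, hV, hE⟩ := hp
  rw [hV] at hv
  obtain ⟨t, ht, hv⟩ := hv
  have htm : t < m := ht.lt_of_ne fun h => hij (hv ▸ h ▸ hend)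
  have hedge : (f t, f (t + 1)) ∈ p.E := hE ▸ ⟨t, htm, rfl⟩
  exact hasOutEdge_of_gridStep (hv ▸ hstep t htm) (hv ▸ hedge)

end IsPositivePath

namespace IsLadderFace

variable {s : ℕ} {k : ℕ → ℕ} {γ : LGraph} {i j : ℕ}

theorem mem_V_iff_hasInEdge (hγ : IsLadderFace s k γ) (hij : (i, j) ≠ (0, 0)) :
    (i, j) ∈ γ.V ↔ HasInEdge γ.E i j := by
  obtain ⟨-, P, hP, hV, hE⟩ := hγ
  simp only [hV, hE, hasInEdge_biUnion, mem_iUnion, exists_prop]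
  exact exists_congr fun p => and_congr_right fun hp => (hP p hp).mem_V_iff_hasInEdge hij

theorem mem_V_iff_hasOutEdge (hγ : IsLadderFace s k γ) (hij : (i, j) ∉ terminals s k) :
    (i, j) ∈ γ.V ↔ HasOutEdge γ.E i j := by
  obtain ⟨-, P, hP, hV, hE⟩ := hγ
  simp only [hV, hE, hasOutEdge_biUnion, mem_iUnion, exists_prop]
  exact exists_congr fun p => and_congr_right fun hp => (hP p hp).mem_V_iff_hasOutEdge hij

theorem V_subset_ladderV (hγ : IsLadderFace s k γ) : γ.V ⊆ ladderV s k := by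
  obtain ⟨-, P, hP, hV, -⟩ := hγ
  rw [hV]
  exact iUnion₂_subset fun p hp => (hP p hp).V_subset_ladderV

theorem mem_V_iff_mem_terminals (hγ : IsLadderFace s k γ) (hij : i + j = nseq k s) :
    (i, j) ∈ γ.V ↔ (i, j) ∈ terminals s k :=
  ⟨fun h => mem_terminals_of_mem_ladderV (hγ.V_subset_ladderV h) hij.ge, fun h => hγ.1 h⟩

theorem hasInEdge_iff_hasOutEdge (hγ : IsLadderFace s k γ) (hij₀ : (i, j) ≠ (0, 0))
    (hij : (i, j) ∉ terminals s k) : HasInEdge γ.E i j ↔ HasOutEdge γ.E i j :=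
  (hγ.mem_V_iff_hasInEdge hij₀).symm.trans (hγ.mem_V_iff_hasOutEdge hij)

end IsLadderFace

namespace HasBlockStructure

variable {s : ℕ} {k : ℕ → ℕ} {lam : ℕ → ℝ} {a : ℕ}

theorem succ_lt_of_eq_nseq (hlam : HasBlockStructure s k lam) (ha : 1 ≤ a) (has : a < nseq k s)
    {t : ℕ} (ht : t ≤ s) (hat : nseq k t = a) : lam (a + 1) < lam a := by
  subst hat
  have ht₀ : t ≠ 0 := by
    rintro rfl
    simp [nseq] at ha
  have hts : t ≠ s := by
    rintro rfl
    exact has.false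
  exact hlam.2 t (Nat.one_le_iff_ne_zero.2 ht₀) (ht.lt_of_ne hts)

theorem succ_eq_of_forall_ne_nseq (hlam : HasBlockStructure s k lam) (ha : 1 ≤ a)
    (has : a < nseq k s) (hne : ∀ t ≤ s, nseq k t ≠ a) : lam (a + 1) = lam a := by
  obtain ⟨t, ht, hlt, hle⟩ := exists_nseq_lt_le ha has.le
  have hlt' : a < nseq k (t + 1) := hle.lt_of_ne (hne (t + 1) ht).symm
  exact (hlam.1 t ht a (a + 1) hlt a.le_succ hlt').symm

theorem succ_lt_iff (hlam : HasBlockStructure s k lam) (ha : 1 ≤ a) (has : a < nseq k s) :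
    lam (a + 1) < lam a ↔ ∃ t ≤ s, nseq k t = a := by
  refine ⟨fun h => ?_, fun ⟨t, ht, hat⟩ => hlam.succ_lt_of_eq_nseq ha has ht hat⟩
  by_contra! hne
  exact h.ne (hlam.succ_eq_of_forall_ne_nseq ha has hne)

theorem succ_le (hlam : HasBlockStructure s k lam) (ha : 1 ≤ a) (has : a < nseq k s) :
    lam (a + 1) ≤ lam a := by
  by_cases h : ∃ t ≤ s, nseq k t = a
  · exact ((hlam.succ_lt_iff ha has).2 h).le
  · push Not at h
    exact (hlam.succ_eq_of_forall_ne_nseq ha has h).le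

end HasBlockStructure

section Interlacing

variable {α : Type*} [Preorder α] {E : Set ((ℕ × ℕ) × (ℕ × ℕ))} {i j : ℕ}

/-- The Gelfand–Cetlin inequalities `x_{i,j+1} ≥ x_{i,j} ≥ x_{i+1,j}` hold at `(i, j)`, and the
first (second) is strict exactly when the left (lower) edge into `(i, j)` belongs to `E`. -/
structure InterlacesAlong (E : Set ((ℕ × ℕ) × (ℕ × ℕ))) (x : ℕ → ℕ → α) (i j : ℕ) : Prop where
  le_up : x i j ≤ x i (j + 1)
  right_le : x (i + 1) j ≤ x i j
  lt_up_iff : x i j < x i (j + 1) ↔ ((i - 1, j), (i, j)) ∈ E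
  right_lt_iff : x (i + 1) j < x i j ↔ ((i, j - 1), (i, j)) ∈ E

theorem lt_iff_lt_or_lt_of_le_of_le {a b c : α} (hab : a ≤ b) (hbc : b ≤ c) :
    a < c ↔ a < b ∨ b < c := by
  refine ⟨fun hac => ?_, fun h => h.elim (fun h => h.trans_le hbc) hab.trans_lt⟩
  by_cases hba : b ≤ a
  · exact Or.inr (hba.trans_lt hac)
  · exact Or.inl (hab.lt_of_not_ge hba)

theorem right_le_up_of_interlacesAlong {x : ℕ → ℕ → α} (hup : InterlacesAlong E x i (j + 1))
    (hright : InterlacesAlong E x (i + 1) j) : x (i + 1) j ≤ x i (j + 1) :=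
  hright.le_up.trans hup.right_le

theorem right_lt_up_iff_hasOutEdge {x : ℕ → ℕ → α} (hup : InterlacesAlong E x i (j + 1))
    (hright : InterlacesAlong E x (i + 1) j) : x (i + 1) j < x i (j + 1) ↔ HasOutEdge E i j :=
  (lt_iff_lt_or_lt_of_le_of_le hright.le_up hup.right_le).trans
    (or_congr hright.lt_up_iff hup.right_lt_iff)

end Interlacing

section BarX

variable {n : ℕ} {lam : ℕ → ℝ} {E : Set ((ℕ × ℕ) × (ℕ × ℕ))} {i j : ℕ}

theorem barX_of_lt (h : n < i + j) : barX n lam E i j = lam i := by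
  rw [barX, dif_pos (Nat.succ_le_of_lt h)]

theorem barX_of_le (h : i + j ≤ n) :
    barX n lam E i j =
      if ((i - 1, j), (i, j)) ∈ E then
        if ((i, j - 1), (i, j)) ∈ E then (barX n lam E i (j + 1) + barX n lam E (i + 1) j) / 2
        else barX n lam E (i + 1) j
      else barX n lam E i (j + 1) := by
  rw [barX, dif_neg (by omega)]
  simp only [dite_eq_ite]

theorem gcEntry_eq_barX {x : GCIdx n → ℝ}
    (hx : ∀ p : GCIdx n, x p = barX n lam E p.1.1 p.1.2) (hi : 1 ≤ i) (hj : 1 ≤ j) :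
    gcEntry n lam x (i, j) = barX n lam E i j := by
  by_cases hij : i + j ≤ n
  · exact (dif_pos (show (i, j) ∈ GCIdx n from ⟨hi, hj, hij⟩)).trans (hx _)
  · rw [barX_of_lt (not_le.1 hij)]
    exact dif_neg fun h => hij h.2.2

theorem interlacesAlong_barX_of_right_lt_up_iff (hij : i + j ≤ n)
    (hle : barX n lam E (i + 1) j ≤ barX n lam E i (j + 1))
    (hlt : barX n lam E (i + 1) j < barX n lam E i (j + 1) ↔ HasInEdge E i j) :
    InterlacesAlong E (barX n lam E) i j := by
  have hx := barX_of_le (lam := lam) (E := E) hij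
  by_cases hleft : ((i - 1, j), (i, j)) ∈ E
  · have hlt' := hlt.2 (Or.inl hleft)
    by_cases hlower : ((i, j - 1), (i, j)) ∈ E
    · rw [if_pos hleft, if_pos hlower] at hx
      exact ⟨by linarith, by linarith, iff_of_true (by linarith) hleft,
        iff_of_true (by linarith) hlower⟩
    · rw [if_pos hleft, if_neg hlower] at hx
      exact ⟨hx.trans_le hle, hx.ge, iff_of_true (hx.trans_lt hlt') hleft,
        iff_of_false hx.not_gt hlower⟩
  · rw [if_neg hleft] at hx
    refine ⟨hx.le, hle.trans_eq hx.symm, iff_of_false hx.not_lt hleft, ?_⟩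
    rw [hx, hlt]
    exact or_iff_right hleft

theorem interlacesAlong_barX_of_hasInEdge_iff
    (hlam : ∀ i, 1 ≤ i → i < n → lam (i + 1) ≤ lam i)
    (hdiag : ∀ i j, 1 ≤ i → 1 ≤ j → i + j = n → (lam (i + 1) < lam i ↔ HasInEdge E i j))
    (hbalanced : ∀ i j, 1 ≤ i → 1 ≤ j → i + j < n → (HasInEdge E i j ↔ HasOutEdge E i j))
    (hi : 1 ≤ i) (hj : 1 ≤ j) (hij : i + j ≤ n) : InterlacesAlong E (barX n lam E) i j := by
  obtain ⟨d, hd⟩ := Nat.exists_eq_add_of_le hij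
  induction d generalizing i j with
  | zero =>
    have hup : barX n lam E i (j + 1) = lam i := barX_of_lt (by omega)
    have hright : barX n lam E (i + 1) j = lam (i + 1) := barX_of_lt (by omega)
    apply interlacesAlong_barX_of_right_lt_up_iff hij <;> rw [hup, hright]
    · exact hlam i hi (by omega)
    · exact hdiag i j hi hj hd.symm
  | succ d ih =>
    have hup : InterlacesAlong E (barX n lam E) i (j + 1) :=
      ih hi (by omega) (by omega) (by omega)
    have hright : InterlacesAlong E (barX n lam E) (i + 1) j :=
      ih (by omega) hj (by omega) (by omega)
    exact interlacesAlong_barX_of_right_lt_up_iff hij (right_le_up_of_interlacesAlong hup hright)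
      ((right_lt_up_iff_hasOutEdge hup hright).trans (hbalanced i j hi hj (by omega)).symm)

end BarX

theorem IsLadderFace.interlacesAlong_barX {s : ℕ} {k : ℕ → ℕ} {lam : ℕ → ℝ} {γ : LGraph}
    {i j : ℕ} (hγ : IsLadderFace s k γ) (hlam : HasBlockStructure s k lam)
    (hi : 1 ≤ i) (hj : 1 ≤ j) (hij : i + j ≤ nseq k s) :
    InterlacesAlong γ.E (barX (nseq k s) lam γ.E) i j := by
  have ne_origin {a b : ℕ} (ha : 1 ≤ a) : (a, b) ≠ (0, 0) := fun h =>
    Nat.one_le_iff_ne_zero.1 ha (congrArg Prod.fst h)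
  refine interlacesAlong_barX_of_hasInEdge_iff (fun a ha han => hlam.succ_le ha han)
    (fun a b ha _ hab => ?_) (fun a b ha _ hab => ?_) hi hj hij
  · calc lam (a + 1) < lam a
      _ ↔ ∃ t ≤ s, nseq k t = a := hlam.succ_lt_iff ha (by omega)
      _ ↔ (a, b) ∈ terminals s k := (mem_terminals_iff_exists_nseq hab).symm
      _ ↔ (a, b) ∈ γ.V := (hγ.mem_V_iff_mem_terminals hab).symm
      _ ↔ HasInEdge γ.E a b := hγ.mem_V_iff_hasInEdge (ne_origin ha)
  · exact hγ.hasInEdge_iff_hasOutEdge (ne_origin ha) fun h =>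
      hab.ne (fst_add_snd_of_mem_terminals h)

/-- claims C1, C2 in the proof of Lemma 2.6. For a face `γ`
of the ladder diagram `Γ_k`, the recursively defined point `x̄` lies in `P_λ`,
the inequality `x̄_{i,j} < x̄_{i,j+1}` holds exactly when `((i-1,j),(i,j))` is an
edge of `γ`, and `x̄_{i,j} > x̄_{i+1,j}` holds exactly when `((i,j-1),(i,j))` is
an edge of `γ`. -/
theorem barX_mem_and_strict (s : ℕ) (hs : 1 ≤ s) (k : ℕ → ℕ) (hk : ∀ i < s, 0 < k i)
    (lam : ℕ → ℝ) (hlam : HasBlockStructure s k lam)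
    (γ : LGraph) (hγ : IsLadderFace s k γ)
    (xbar : GCIdx (nseq k s) → ℝ)
    (hxbar : ∀ p : GCIdx (nseq k s), xbar p = barX (nseq k s) lam γ.E p.1.1 p.1.2) :
    xbar ∈ GCPoly (nseq k s) lam ∧
    ∀ i j : ℕ, (i, j) ∈ GCIdx (nseq k s) →
      (gcEntry (nseq k s) lam xbar (i, j) < gcEntry (nseq k s) lam xbar (i, j + 1) ↔
        ((i - 1, j), (i, j)) ∈ γ.E) ∧
      (gcEntry (nseq k s) lam xbar (i + 1, j) < gcEntry (nseq k s) lam xbar (i, j) ↔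
        ((i, j - 1), (i, j)) ∈ γ.E) := by
  have interlaces {i j : ℕ} (hij : (i, j) ∈ GCIdx (nseq k s)) :
      InterlacesAlong γ.E (fun a b => gcEntry (nseq k s) lam xbar (a, b)) i j := by
    obtain ⟨hi, hj, hn⟩ := hij
    obtain ⟨le_up, right_le, lt_up_iff, right_lt_iff⟩ := hγ.interlacesAlong_barX hlam hi hj hn
    have hi' : 1 ≤ i + 1 := Nat.le_add_left 1 i
    have hj' : 1 ≤ j + 1 := Nat.le_add_left 1 j
    constructor <;> simpa only [gcEntry_eq_barX hxbar, hi, hj, hi', hj']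
  exact ⟨fun i j hij => ⟨(interlaces hij).le_up, (interlaces hij).right_le⟩,
    fun i j hij => ⟨(interlaces hij).lt_up_iff, (interlaces hij).right_lt_iff⟩⟩
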